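/- Let q be a prime and let c, d₁, d₂ be integers coprime to q, with c⁻¹ an integer inverse of c modulo q. Then one has the exact identity ∑_{α = 0}^{q−1} e_q(αc)·S(1, αd₁; q)·S(1, αd₂; q) = q·e_q(−c⁻¹(d₁ + d₂))·S(c⁻¹d₁, c⁻¹d₂; q) − q. -/

import Mathlib

open Finset

/-- `e_q(x) = exp(2πi x / q)`. -/
noncomputable def expq (q : ℕ) (x : ℤ) : ℂ :=
  Complex.exp (2 * Real.pi * Complex.I * x / q)

/-- The Kloosterman sum `S(a, b; q) = ∑_{x ∈ (ℤ/qℤ)ˣ} e_q(a x + b x⁻¹)`. -/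
noncomputable def kloos (a b : ℤ) (q : ℕ) [NeZero q] : ℂ :=
  ∑ x : (ZMod q)ˣ,
    expq q (a * ((x : ZMod q).val : ℤ) + b * ((((x⁻¹ : (ZMod q)ˣ) : ZMod q)).val : ℤ))

lemma expq_eq (q : ℕ) [NeZero q] (x : ℤ) : expq q x = ZMod.stdAddChar (x : ZMod q) := by
  rw [ZMod.stdAddChar_coe, expq]

lemma kloos_eq (a b : ℤ) (q : ℕ) [NeZero q] : kloos a b q =
    ∑ x : (ZMod q)ˣ, ZMod.stdAddChar
      ((a : ZMod q) * (x : ZMod q) + (b : ZMod q) * ((x⁻¹ : (ZMod q)ˣ) : ZMod q)) := by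
  unfold kloos
  refine Finset.sum_congr rfl fun x _ => ?_
  rw [expq_eq]
  push_cast
  simp

lemma sum_range_zmod (q : ℕ) [NeZero q] (f : ZMod q → ℂ) :
    ∑ a ∈ Finset.range q, f (a : ZMod q) = ∑ a : ZMod q, f a := by
  refine Finset.sum_bij' (fun a _ => (a : ZMod q)) (fun a _ => a.val) ?_ ?_ ?_ ?_ ?_
  · simp
  · intro a _
    simpa using ZMod.val_lt a
  · intro a ha
    exact ZMod.val_cast_of_lt (by simpa using ha)
  · simp
  · simp

lemma key_bij {F : Type*} [Field F] [Fintype F] [DecidableEq F] (ψ : F → ℂ)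
    (c d e : F) (hc : c ≠ 0) (hd : d ≠ 0) (he : e ≠ 0) :
    ∑ p : Fˣ × Fˣ with c + d * (p.1 : F)⁻¹ + e * (p.2 : F)⁻¹ = 0, ψ (p.1 + p.2)
      = ∑ v : Fˣ with v ≠ 1, ψ (c⁻¹ * (d * (v - 1) + e * ((v : F)⁻¹ - 1))) := by
  symm
  have hne : ∀ v : Fˣ, v ∈ Finset.univ.filter (fun v : Fˣ => v ≠ 1) → (v : F) - 1 ≠ 0 := by
    intro v hv h
    simp only [Finset.mem_filter, Finset.mem_univ, true_and] at hv
    exact hv (Units.ext (by simpa using sub_eq_zero.mp h))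
  have hne' : ∀ v : Fˣ, v ∈ Finset.univ.filter (fun v : Fˣ => v ≠ 1) → (v : F)⁻¹ - 1 ≠ 0 := by
    intro v hv h
    apply hne v hv
    have h2 : (v : F) ≠ 0 := v.ne_zero
    have h3 : (v : F)⁻¹ = 1 := sub_eq_zero.mp h
    rw [inv_eq_one] at h3
    rw [h3, sub_self]
  refine Finset.sum_bij
    (fun v hv => (Units.mk0 (c⁻¹ * (d * ((v : F) - 1)))
        (mul_ne_zero (inv_ne_zero hc) (mul_ne_zero hd (hne v hv))),
      Units.mk0 (c⁻¹ * (e * ((v : F)⁻¹ - 1)))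
        (mul_ne_zero (inv_ne_zero hc) (mul_ne_zero he (hne' v hv))))) ?_ ?_ ?_ ?_
  · intro v hv
    have h1 := hne v hv
    have h2 := hne' v hv
    have h3 : (v : F) ≠ 0 := v.ne_zero
    have h4 : (v : F)⁻¹ - 1 = -((v : F) - 1) / v := by field_simp; ring
    simp only [Finset.mem_filter, Finset.mem_univ, true_and, Units.val_mk0]
    rw [h4]
    field_simp
    ring
  · intro v hv w hw h
    have h := congrArg (fun p : Fˣ × Fˣ => (p.1 : F)) h
    simp only [Units.val_mk0] at h
    have h := mul_left_cancel₀ hd (mul_left_cancel₀ (inv_ne_zero hc) h)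
    exact Units.ext (sub_left_injective h)
  · rintro ⟨x, y⟩ hp
    simp only [Finset.mem_filter, Finset.mem_univ, true_and] at hp
    have hx : (x : F) ≠ 0 := x.ne_zero
    have hy : (y : F) ≠ 0 := y.ne_zero
    have hp' : c * x * y + d * y + e * x = 0 := by
      have : c * x * y + d * y + e * x = (c + d * (x : F)⁻¹ + e * (y : F)⁻¹) * (x * y) := by
        field_simp
      rw [this, hp, zero_mul]
    have hu : c * x + d ≠ 0 := by
      intro h
      apply mul_ne_zero he hx
      linear_combination hp' - (y : F) * h
    have hu' : c * (x : F) / d + 1 ≠ 0 := by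
      intro h
      apply hu
      field_simp at h
      simpa using h
    refine ⟨Units.mk0 (c * x / d + 1) hu', ?_, ?_⟩
    · simp only [Finset.mem_filter, Finset.mem_univ, true_and]
      intro h
      have h := congrArg (fun u : Fˣ => (u : F)) h
      simp [hc, hd] at h
    · refine Prod.ext (Units.ext ?_) (Units.ext ?_)
      · simp only [Units.val_mk0]
        field_simp
        ring
      · simp only [Units.val_mk0]
        have : c * (x : F) / d + 1 = (c * x + d) / d := by field_simp
        rw [this, inv_div]
        field_simp
        linear_combination -c * hp'
  · intro v hv
    simp only [Units.val_mk0]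
    ring_nf

/-- For a prime `q`, integers `c`, `d₁`, `d₂` coprime to `q`, and `c⁻¹` an integer
inverse of `c` modulo `q`:
`∑_{α=0}^{q−1} e_q(αc) S(1, αd₁; q) S(1, αd₂; q)
  = q · e_q(−c⁻¹(d₁+d₂)) · S(c⁻¹d₁, c⁻¹d₂; q) − q`. -/
theorem sum_eq_mul_kloos_sub (q : ℕ) [NeZero q] (hq : q.Prime) (c d₁ d₂ cinv : ℤ)
    (hc : IsCoprime c (q : ℤ)) (h₁ : IsCoprime d₁ (q : ℤ)) (h₂ : IsCoprime d₂ (q : ℤ))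
    (hcinv : (q : ℤ) ∣ (c * cinv - 1)) :
    ∑ α ∈ Finset.range q,
        expq q ((α : ℤ) * c) * kloos 1 ((α : ℤ) * d₁) q * kloos 1 ((α : ℤ) * d₂) q
      = (q : ℂ) * expq q (-(cinv * (d₁ + d₂))) * kloos (cinv * d₁) (cinv * d₂) q
        - (q : ℂ) := by
  have : Fact q.Prime := ⟨hq⟩
  have hunit : ∀ z : ℤ, IsCoprime z (q : ℤ) → (z : ZMod q) ≠ 0 := by
    intro z hz h
    obtain ⟨a, b, hab⟩ := hz
    have := congrArg (Int.cast : ℤ → ZMod q) hab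
    push_cast at this
    simp [h] at this
  have hc0 := hunit c hc
  have hd0 := hunit d₁ h₁
  have he0 := hunit d₂ h₂
  have hci : (cinv : ZMod q) = (c : ZMod q)⁻¹ := by
    have h := (ZMod.intCast_zmod_eq_zero_iff_dvd (c * cinv - 1) q).mpr hcinv
    push_cast at h
    exact eq_inv_of_mul_eq_one_right (sub_eq_zero.mp h)
  set ψ : AddChar (ZMod q) ℂ := ZMod.stdAddChar with hψ
  have hprim : ψ.IsPrimitive := ZMod.isPrimitive_stdAddChar q
  simp only [kloos_eq, expq_eq, ← hψ]
  push_cast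
  rw [hci]
  rw [sum_range_zmod q (fun a => ψ (a * c) *
    (∑ x : (ZMod q)ˣ, ψ (1 * (x : ZMod q) + a * d₁ * (x : ZMod q)⁻¹)) *
    (∑ x : (ZMod q)ˣ, ψ (1 * (x : ZMod q) + a * d₂ * (x : ZMod q)⁻¹)))]
  have hL : ∀ a : ZMod q, ψ (a * c) *
    (∑ x : (ZMod q)ˣ, ψ (1 * (x : ZMod q) + a * d₁ * (x : ZMod q)⁻¹)) *
    (∑ x : (ZMod q)ˣ, ψ (1 * (x : ZMod q) + a * d₂ * (x : ZMod q)⁻¹)) =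
    ∑ p : (ZMod q)ˣ × (ZMod q)ˣ, ψ (p.1 + p.2) *
      ψ (a * (c + d₁ * (p.1 : ZMod q)⁻¹ + d₂ * (p.2 : ZMod q)⁻¹)) := by
    intro a
    rw [mul_assoc, Finset.sum_mul_sum, ← Finset.sum_product', Finset.mul_sum]
    refine Finset.sum_congr rfl fun p _ => ?_
    rw [← AddChar.map_add_eq_mul, ← AddChar.map_add_eq_mul, ← AddChar.map_add_eq_mul]
    congr 1
    ring
  simp only [hL]
  rw [Finset.sum_comm]
  simp only [← Finset.mul_sum, AddChar.sum_mulShift _ hprim, ZMod.card]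
  have hM : ∀ p : (ZMod q)ˣ × (ZMod q)ˣ, ψ (p.1 + p.2) *
      (((if (c : ZMod q) + d₁ * (p.1 : ZMod q)⁻¹ + d₂ * (p.2 : ZMod q)⁻¹ = 0 then q else 0 : ℕ)) : ℂ)
      = q * (if (c : ZMod q) + d₁ * (p.1 : ZMod q)⁻¹ + d₂ * (p.2 : ZMod q)⁻¹ = 0
        then ψ (p.1 + p.2) else 0) := by
    intro p
    split_ifs <;> simp [mul_comm]
  simp only [hM]
  rw [← Finset.mul_sum, ← Finset.sum_filter, key_bij ψ _ _ _ hc0 hd0 he0, mul_assoc,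
    Finset.mul_sum Finset.univ _ (ψ (-((c : ZMod q)⁻¹ * (d₁ + d₂))))]
  have hR : ∀ v : (ZMod q)ˣ, ψ (-((c : ZMod q)⁻¹ * (d₁ + d₂))) *
      ψ ((c : ZMod q)⁻¹ * d₁ * v + (c : ZMod q)⁻¹ * d₂ * (v : ZMod q)⁻¹) =
      ψ ((c : ZMod q)⁻¹ * (d₁ * (v - 1) + d₂ * ((v : ZMod q)⁻¹ - 1))) := by
    intro v
    rw [← AddChar.map_add_eq_mul]
    congr 1
    ring
  simp only [hR]
  rw [← Finset.sum_filter_add_sum_filter_not Finset.univ (fun v : (ZMod q)ˣ => v ≠ 1)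
    (fun v => ψ ((c : ZMod q)⁻¹ * (d₁ * (v - 1) + d₂ * ((v : ZMod q)⁻¹ - 1))))]
  have h1 : Finset.univ.filter (fun v : (ZMod q)ˣ => ¬ v ≠ 1) = {1} := by
    ext v
    simp
  rw [h1, Finset.sum_singleton]
  simp only [Units.val_one, sub_self, inv_one, mul_zero, add_zero, AddChar.map_zero_eq_one]
  ring
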